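/- Let s ≥ 3, δ ≥ s+1, and I = (M_1,...,M_s, M) ⊂ K[X_1,...,X_s,Y] as in Example (with M_i = X^{(δ−1)e_i + e_{i+1}} cyclically and M = X_1^{δ−s+1}X_2⋯X_s Y^a for a ≥ 1). Then for all 1 ≤ t ≤ r(I) and n ≥ 0, the monomial M^t M_1^n is a minimal generator of I^{t+n}; consequently ε(I;n) = an for n ≤ r(I)−1 and ε(I;n) = r(I)·a for n ≥ r(I), so the stability index gstab(I) = r(I) > (δ−1)^{s−2}. -/

import Mathlib

open MvPolynomial

/-- The maximal generating degree `d(I)` of a homogeneous ideal. -/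
noncomputable def maxGenDeg {K : Type*} [Field K] {σ : Type*}
    (I : Ideal (MvPolynomial σ K)) : ℕ :=
  sInf {d | I = Ideal.span {f | f ∈ I ∧ f.totalDegree ≤ d}}

/-! A monomial of a monomial ideal is a minimal generator exactly when its exponent is minimal among
those of the given generators. The exponents of the generators of `I ^ n` are
`t • m + ∑ i, c i • g i` with `t + ∑ i, c i = n`, where `m = v + a e_Y` and where `v` and the `g i`
have the same degree and do not involve `Y`. Hence such an exponent is below another one only if the
two agree away from `Y`, and everything is governed by the `q > 0` for which `q • v` is a
combination of the `g i`: if `q` is the least one, then `r(I) = q - 1`, because `M ^ q` is the first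
power of `M` that is divisible by a product of as many `M_i`. In particular `M ^ t * M_1 ^ n` with
`t ≤ r(I)` could only be divisible by a product in which `M_1` occurs less than `n` times, and the
coordinates `X_1` and `X_s` rule that out.

For the cyclic exponents, `q • v = ∑ i, c i • g i` is a linear recursion for `c`. The defects
`δ * c i - q` get multiplied by `-(δ - 1)` at each of `s - 1` steps and cannot all vanish, so two
neighbouring coefficients differ by at least `(δ - 1) ^ (s - 2)`, which forces `q` to be larger. -/

open Finsupp (single linearCombination)
open scoped Pointwise

theorem sup_span_singleton_pow_succ {R : Type*} [CommSemiring R] (J : Ideal R) (x : R) (n : ℕ) :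
    (J ⊔ Ideal.span {x}) ^ (n + 1) =
      J * (J ⊔ Ideal.span {x}) ^ n ⊔ Ideal.span {x ^ (n + 1)} := by
  induction n with
  | zero => simp
  | succ n ih =>
    set I := J ⊔ Ideal.span {x}
    have absorb : Ideal.span {x} * (J * I ^ n) ≤ J * I ^ (n + 1) := by
      rw [mul_left_comm, pow_succ']
      exact Ideal.mul_mono_right (Ideal.mul_mono_left le_sup_right)
    have expand : Ideal.span {x} * I ^ (n + 1) =
        Ideal.span {x} * (J * I ^ n) ⊔ Ideal.span {x ^ (n + 1 + 1)} := by
      rw [ih, Ideal.mul_sup, Ideal.span_singleton_mul_span_singleton, ← pow_succ']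
    calc I ^ (n + 1 + 1)
        = J * I ^ (n + 1) ⊔ Ideal.span {x} * I ^ (n + 1) := by rw [pow_succ' I, Ideal.sup_mul]
      _ = J * I ^ (n + 1) ⊔ Ideal.span {x ^ (n + 1 + 1)} := by
        rw [expand, ← sup_assoc, sup_eq_left.2 absorb]

theorem sup_span_singleton_pow_succ_eq_mul_pow_iff {R : Type*} [CommSemiring R] (J : Ideal R)
    (x : R) (n : ℕ) :
    (J ⊔ Ideal.span {x}) ^ (n + 1) = J * (J ⊔ Ideal.span {x}) ^ n ↔
      x ^ (n + 1) ∈ J * (J ⊔ Ideal.span {x}) ^ n := by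
  rw [sup_span_singleton_pow_succ, sup_eq_left, Ideal.span_singleton_le_iff_mem]

section MonomialIdeal

variable {σ : Type*} (R : Type*) [CommSemiring R]

/-- The monomial ideal generated by the monomials `x ^ e` with exponent `e ∈ S`. -/
noncomputable def monomialIdeal (S : Set (σ →₀ ℕ)) : Ideal (MvPolynomial σ R) :=
  Ideal.span ((fun e ↦ monomial e 1) '' S)

variable {R} {S T : Set (σ →₀ ℕ)} {e : σ →₀ ℕ}

theorem mem_monomialIdeal_iff {p : MvPolynomial σ R} :
    p ∈ monomialIdeal R S ↔ ∀ e ∈ p.support, ∃ f ∈ S, f ≤ e :=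
  mem_ideal_span_monomial_image

theorem monomial_mem_monomialIdeal_iff [Nontrivial R] :
    monomial e (1 : R) ∈ monomialIdeal R S ↔ ∃ f ∈ S, f ≤ e := by
  classical simp [mem_monomialIdeal_iff, support_monomial]

theorem monomial_mem_monomialIdeal (he : e ∈ S) : monomial e (1 : R) ∈ monomialIdeal R S :=
  Ideal.subset_span ⟨e, he, rfl⟩

theorem span_range_monomial {ι : Type*} (g : ι → σ →₀ ℕ) :
    Ideal.span (Set.range fun i ↦ monomial (g i) (1 : R)) = monomialIdeal R (Set.range g) := by
  rw [monomialIdeal, ← Set.range_comp]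
  rfl

theorem monomialIdeal_mul :
    monomialIdeal R S * monomialIdeal R T = monomialIdeal R (S + T) := by
  rw [monomialIdeal, monomialIdeal, Ideal.span_mul_span', monomialIdeal, ← Set.image2_mul,
    ← Set.image2_add, Set.image2_image_left, Set.image2_image_right, Set.image_image2]
  simp [monomial_mul]

theorem monomialIdeal_insert (m : σ →₀ ℕ) :
    monomialIdeal R (insert m S) = monomialIdeal R S ⊔ Ideal.span {monomial m 1} := by
  rw [monomialIdeal, Set.image_insert_eq, Ideal.span_insert, sup_comm, monomialIdeal]

theorem idealOfVars_eq_monomialIdeal :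
    idealOfVars σ R = monomialIdeal R (Set.range fun i ↦ single i 1) :=
  span_range_monomial _

theorem monomial_mem_idealOfVars_mul_monomialIdeal_iff [Nontrivial R] :
    monomial e 1 ∈ idealOfVars σ R * monomialIdeal R S ↔ ∃ f ∈ S, f < e := by
  rw [idealOfVars_eq_monomialIdeal, monomialIdeal_mul, monomial_mem_monomialIdeal_iff]
  constructor
  · rintro ⟨_, ⟨_, ⟨i, rfl⟩, f, hf, rfl⟩, hle⟩
    exact ⟨f, hf, (lt_add_of_pos_left f (by simp [pos_iff_ne_zero])).trans_le hle⟩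
  · rintro ⟨f, hf, hlt⟩
    obtain ⟨w, rfl⟩ := exists_add_of_le hlt.le
    obtain ⟨i, hi⟩ := Finsupp.ne_iff.1 (show w ≠ 0 by rintro rfl; simp at hlt)
    refine ⟨_, ⟨_, ⟨i, rfl⟩, f, hf, rfl⟩, ?_⟩
    change single i 1 + f ≤ f + w
    rw [add_comm]
    gcongr
    simpa [Nat.one_le_iff_ne_zero] using hi

theorem monomialIdeal_eq_span_totalDegree_le_iff [Nontrivial R] {d : ℕ} :
    monomialIdeal R S = Ideal.span {p | p ∈ monomialIdeal R S ∧ p.totalDegree ≤ d} ↔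
      ∀ e, Minimal (· ∈ S) e → e.degree ≤ d := by
  constructor
  · intro h e he
    have hle : monomialIdeal R S ≤ monomialIdeal R {f ∈ S | f.degree ≤ d} := by
      rw [h, Ideal.span_le]
      rintro p ⟨hp, hpd⟩
      refine mem_monomialIdeal_iff.2 fun x hx ↦ ?_
      obtain ⟨f, hf, hfx⟩ := mem_monomialIdeal_iff.1 hp x hx
      exact ⟨f, ⟨hf, (Finsupp.degree_mono hfx).trans ((le_totalDegree hx).trans hpd)⟩, hfx⟩
    obtain ⟨f, ⟨hf, hfd⟩, hfe⟩ :=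
      monomial_mem_monomialIdeal_iff.1 (hle (monomial_mem_monomialIdeal he.prop))
    exact (Finsupp.degree_mono (he.le_of_le hf hfe)).trans hfd
  · intro h
    refine le_antisymm ?_ (Ideal.span_le.2 fun p hp ↦ hp.1)
    refine Ideal.span_le.2 ?_
    rintro _ ⟨e, he, rfl⟩
    obtain ⟨f, hfe, hf⟩ := exists_minimal_le_of_wellFoundedLT (· ∈ S) e he
    obtain ⟨w, rfl⟩ := exists_add_of_le hfe
    have hmem : monomial f (1 : R) ∈
        Ideal.span {p | p ∈ monomialIdeal R S ∧ p.totalDegree ≤ d} :=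
      Ideal.subset_span ⟨monomial_mem_monomialIdeal hf.prop,
        (totalDegree_monomial f one_ne_zero).trans_le (h f hf)⟩
    simpa [monomial_mul] using Ideal.mul_mem_right (monomial w (1 : R)) _ hmem

theorem maxGenDeg_monomialIdeal {K : Type*} [Field K] {d : ℕ}
    (hd : IsGreatest (Finsupp.degree '' {e | Minimal (· ∈ S) e}) d) :
    maxGenDeg (monomialIdeal K S) = d := by
  have bounds : {d | monomialIdeal K S =
      Ideal.span {p | p ∈ monomialIdeal K S ∧ p.totalDegree ≤ d}} =
      upperBounds (Finsupp.degree '' {e | Minimal (· ∈ S) e}) := by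
    ext d
    rw [Set.mem_ofPred_eq, monomialIdeal_eq_span_totalDegree_le_iff, mem_upperBounds,
      Set.forall_mem_image]
    rfl
  rw [maxGenDeg, bounds]
  exact hd.isLUB.csInf_eq

end MonomialIdeal

section Finsupp

variable {σ : Type*} {e f : σ →₀ ℕ}

theorem finsupp_eq_of_le_of_degree_eq (hle : e ≤ f) (hdeg : e.degree = f.degree) : e = f := by
  obtain ⟨w, rfl⟩ := exists_add_of_le hle
  have hw : w.degree = 0 := by simpa using hdeg
  rw [(Finsupp.degree_eq_zero_iff w).1 hw, add_zero]

theorem finsupp_add_single_le_add_single_iff {y : σ} (he : e y = 0) (hf : f y = 0) {k l : ℕ} :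
    e + single y k ≤ f + single y l ↔ e ≤ f ∧ k ≤ l := by
  classical
  refine ⟨fun h ↦ ⟨fun i ↦ ?_, by simpa [he, hf] using h y⟩, fun h ↦ by gcongr <;> simp [h]⟩
  rcases eq_or_ne i y with rfl | hi
  · simp [he, hf]
  · simpa [hi] using h i

theorem exists_eq_single_add_of_degree_ne_zero (he : e.degree ≠ 0) :
    ∃ i e', e = single i 1 + e' := by
  obtain ⟨b, hbe, hb⟩ := e.exists_le_degree_eq 1 (Nat.one_le_iff_ne_zero.2 he)
  obtain ⟨i, rfl⟩ : b ∈ Set.range fun i ↦ single i 1 := Finsupp.range_single_one ▸ hb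
  exact ⟨i, exists_add_of_le hbe⟩

end Finsupp

section PowerExponents

variable {σ ι : Type*} (g : ι → σ →₀ ℕ) (m : σ →₀ ℕ)

/-- The exponent of the product `M ^ t * ∏ i, M_i ^ c i` of generators `M_i = x ^ g i` and
`M = x ^ m`. -/
noncomputable def prodExponent (t : ℕ) (c : ι →₀ ℕ) : σ →₀ ℕ :=
  t • m + linearCombination ℕ g c

/-- The exponents of the `n`-fold products of the generators `x ^ g i` and `x ^ m`. -/
def powExponents (n : ℕ) : Set (σ →₀ ℕ) :=
  {e | ∃ t c, t + c.degree = n ∧ prodExponent g m t c = e}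

variable {g m}

theorem add_prodExponent (t : ℕ) (c : ι →₀ ℕ) :
    m + prodExponent g m t c = prodExponent g m (t + 1) c := by
  rw [prodExponent, prodExponent, succ_nsmul', add_assoc]

theorem gen_add_prodExponent (i : ι) (t : ℕ) (c : ι →₀ ℕ) :
    g i + prodExponent g m t c = prodExponent g m t (single i 1 + c) := by
  simp only [prodExponent, map_add, Finsupp.linearCombination_single, one_smul]
  exact add_left_comm _ _ _

theorem prodExponent_add_single (y : σ) (a t : ℕ) (c : ι →₀ ℕ) :
    prodExponent g (m + single y a) t c = prodExponent g m t c + single y (t * a) := by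
  simp only [prodExponent, nsmul_add, Finsupp.smul_single, smul_eq_mul]
  exact add_right_comm _ _ _

theorem powExponents_zero : powExponents g m 0 = {0} := by
  ext e
  simp [powExponents, prodExponent, and_assoc, Finsupp.degree_eq_zero_iff]

theorem powExponents_succ (n : ℕ) :
    powExponents g m (n + 1) = insert m (Set.range g) + powExponents g m n := by
  ext e
  constructor
  · rintro ⟨t, c, h, rfl⟩
    by_cases hc : c.degree = 0
    · obtain ⟨t, rfl⟩ : ∃ t', t = t' + 1 := ⟨t - 1, by omega⟩
      exact ⟨m, Set.mem_insert _ _, _, ⟨t, c, by omega, rfl⟩, add_prodExponent t c⟩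
    · obtain ⟨i, c, rfl⟩ := exists_eq_single_add_of_degree_ne_zero hc
      rw [map_add, Finsupp.degree_single] at h
      exact ⟨g i, Or.inr ⟨i, rfl⟩, _, ⟨t, c, by omega, rfl⟩, gen_add_prodExponent i t c⟩
  · rintro ⟨_, rfl | ⟨i, rfl⟩, _, ⟨t, c, h, rfl⟩, rfl⟩
    · exact ⟨t + 1, c, by omega, (add_prodExponent t c).symm⟩
    · refine ⟨t, single i 1 + c, ?_, (gen_add_prodExponent i t c).symm⟩
      rw [map_add, Finsupp.degree_single]
      omega

theorem monomialIdeal_insert_range_pow (R : Type*) [CommSemiring R] (n : ℕ) :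
    monomialIdeal R (insert m (Set.range g)) ^ n = monomialIdeal R (powExponents g m n) := by
  induction n with
  | zero => simp [powExponents_zero, monomialIdeal]
  | succ n ih => rw [pow_succ', ih, monomialIdeal_mul, powExponents_succ]

end PowerExponents

section ReductionNumber

/-- The reduction number `r_J(I)`. As an infimum in `ℕ` it is `0` when `J` is not a reduction
of `I`. -/
noncomputable def reductionNumber {R : Type*} [CommSemiring R] (J I : Ideal R) : ℕ :=
  sInf {n | I ^ (n + 1) = J * I ^ n}

variable {σ ι : Type*}

/-- The positive multiples of `v` lying in the semigroup generated by the `g i`. In terms of ideals: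
the `q > 0` for which `(x ^ v) ^ q` is a product of monomials `x ^ g i`. -/
def relationDegrees (g : ι → σ →₀ ℕ) (v : σ →₀ ℕ) : Set ℕ :=
  {q | 0 < q ∧ ∃ c, linearCombination ℕ g c = q • v}

/-- In every factorization of `(x ^ v) ^ q * (x ^ g i₀) ^ n` into monomials `x ^ g i`, the factor
`x ^ g i₀` occurs at least `n` times. -/
def IsUnavoidable (g : ι → σ →₀ ℕ) (v : σ →₀ ℕ) (i₀ : ι) : Prop :=
  ∀ (n q : ℕ) (c : ι →₀ ℕ), linearCombination ℕ g c = q • v + n • g i₀ → n ≤ c i₀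

/-- The exponents `g i` and `v` have the same positive degree `δ` and do not involve the
variable `y`. -/
structure IsEquigenerated (g : ι → σ →₀ ℕ) (v : σ →₀ ℕ) (y : σ) (δ : ℕ) : Prop where
  degree_pos : 0 < δ
  degree_gen : ∀ i, (g i).degree = δ
  degree_base : v.degree = δ
  gen_apply : ∀ i, g i y = 0
  base_apply : v y = 0

namespace IsEquigenerated

variable {g : ι → σ →₀ ℕ} {v : σ →₀ ℕ} {y : σ} {δ : ℕ} (h : IsEquigenerated g v y δ)
include h

theorem degree_linearCombination (c : ι →₀ ℕ) :
    (linearCombination ℕ g c).degree = δ * c.degree := by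
  rw [Finsupp.linearCombination_apply, Finsupp.sum, map_sum, Finsupp.degree_apply, Finset.mul_sum]
  simp only [map_nsmul, h.degree_gen, smul_eq_mul, mul_comm]

theorem degree_prodExponent_base (t : ℕ) (c : ι →₀ ℕ) :
    (prodExponent g v t c).degree = δ * (t + c.degree) := by
  rw [prodExponent, map_add, map_nsmul, h.degree_base, h.degree_linearCombination, smul_eq_mul,
    mul_add, mul_comm]

theorem prodExponent_base_apply (t : ℕ) (c : ι →₀ ℕ) : prodExponent g v t c y = 0 := by
  simp [prodExponent, h.base_apply, Finsupp.linearCombination_apply, Finsupp.sum, h.gen_apply]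

theorem degree_prodExponent (a t : ℕ) (c : ι →₀ ℕ) :
    (prodExponent g (v + single y a) t c).degree = δ * (t + c.degree) + a * t := by
  rw [prodExponent_add_single, map_add, h.degree_prodExponent_base, Finsupp.degree_single,
    mul_comm a]

theorem degree_eq_of_linearCombination_eq {q : ℕ} {c : ι →₀ ℕ}
    (hc : linearCombination ℕ g c = q • v) : c.degree = q := by
  have hdeg : δ * c.degree = δ * q := by
    rw [← h.degree_linearCombination, hc, map_nsmul, h.degree_base, smul_eq_mul, mul_comm]
  exact Nat.eq_of_mul_eq_mul_left h.degree_pos hdeg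

-- The comparison away from `y` is between exponents of the same degree, hence an equality.
theorem prodExponent_le_iff {a : ℕ} (ha : 0 < a) {t t' : ℕ} {c c' : ι →₀ ℕ}
    (hdeg : t' + c'.degree = t + c.degree) :
    prodExponent g (v + single y a) t' c' ≤ prodExponent g (v + single y a) t c ↔
      ∃ q, t = t' + q ∧ linearCombination ℕ g c' = q • v + linearCombination ℕ g c := by
  have base_le_iff : prodExponent g v t' c' ≤ prodExponent g v t c ↔
      prodExponent g v t' c' = prodExponent g v t c :=
    ⟨fun hle ↦ finsupp_eq_of_le_of_degree_eq hle
      (by rw [h.degree_prodExponent_base, h.degree_prodExponent_base, hdeg]), le_of_eq⟩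
  rw [prodExponent_add_single, prodExponent_add_single,
    finsupp_add_single_le_add_single_iff (h.prodExponent_base_apply t' c')
      (h.prodExponent_base_apply t c), mul_le_mul_iff_left₀ ha, base_le_iff, and_comm,
    le_iff_exists_add, ← exists_and_right]
  refine exists_congr fun q ↦ and_congr_right ?_
  rintro rfl
  rw [prodExponent, prodExponent, add_smul, add_assoc, add_right_inj]

theorem pow_succ_eq_mul_pow_iff (R : Type*) [CommSemiring R] [Nontrivial R] {a : ℕ} (ha : 0 < a)
    (n : ℕ) :
    monomialIdeal R (insert (v + single y a) (Set.range g)) ^ (n + 1) =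
        monomialIdeal R (Set.range g) *
          monomialIdeal R (insert (v + single y a) (Set.range g)) ^ n ↔
      ∃ q ∈ relationDegrees g v, q ≤ n + 1 := by
  have hpow : (monomial (v + single y a) (1 : R)) ^ (n + 1) =
      monomial (prodExponent g (v + single y a) (n + 1) 0) 1 := by
    simp [monomial_pow, prodExponent]
  rw [monomialIdeal_insert, sup_span_singleton_pow_succ_eq_mul_pow_iff, ← monomialIdeal_insert,
    monomialIdeal_insert_range_pow, monomialIdeal_mul, hpow, monomial_mem_monomialIdeal_iff]
  constructor
  · rintro ⟨_, ⟨_, ⟨i, rfl⟩, _, ⟨t, c, hn, rfl⟩, rfl⟩, hle⟩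
    beta_reduce at hle
    rw [gen_add_prodExponent,
      h.prodExponent_le_iff ha (by simp only [map_add, Finsupp.degree_single, map_zero]; omega)]
      at hle
    obtain ⟨q, hq, hc⟩ := hle
    rw [map_zero, add_zero] at hc
    have := h.degree_eq_of_linearCombination_eq hc
    rw [map_add, Finsupp.degree_single] at this
    exact ⟨q, ⟨by omega, _, hc⟩, by omega⟩
  · rintro ⟨q, ⟨hq, c, hc⟩, hqn⟩
    have hdeg := h.degree_eq_of_linearCombination_eq hc
    obtain ⟨i, c, rfl⟩ := exists_eq_single_add_of_degree_ne_zero (hdeg.trans_ne hq.ne')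
    rw [map_add, Finsupp.degree_single] at hdeg
    refine ⟨_, ⟨g i, ⟨i, rfl⟩, _, ⟨n + 1 - q, c, by omega, rfl⟩, rfl⟩, ?_⟩
    beta_reduce
    rw [gen_add_prodExponent,
      h.prodExponent_le_iff ha (by simp only [map_add, Finsupp.degree_single, map_zero]; omega)]
    exact ⟨q, by omega, by rw [hc, map_zero, add_zero]⟩

theorem isLeast_relationDegrees (R : Type*) [CommSemiring R] [Nontrivial R] {a : ℕ} (ha : 0 < a)
    (hne : (relationDegrees g v).Nonempty) :
    IsLeast (relationDegrees g v) (reductionNumber (monomialIdeal R (Set.range g))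
      (monomialIdeal R (insert (v + single y a) (Set.range g))) + 1) := by
  simp only [reductionNumber, h.pow_succ_eq_mul_pow_iff R ha]
  obtain ⟨q, hq⟩ : ∃ q, IsLeast (relationDegrees g v) q := ⟨_, isLeast_csInf hne⟩
  have hset : {n | ∃ q ∈ relationDegrees g v, q ≤ n + 1} = Set.Ici (q - 1) := by
    ext n
    refine ⟨fun ⟨x, hx, hxn⟩ ↦ ?_, fun hn ↦ ⟨q, hq.1, Nat.le_add_of_sub_le hn⟩⟩
    exact Nat.sub_le_of_le_add ((hq.2 hx).trans hxn)
  rwa [hset, csInf_Ici, Nat.sub_add_cancel hq.1.1]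

theorem lt_of_minimal_prodExponent {a : ℕ} (ha : 0 < a) {q t : ℕ} {c : ι →₀ ℕ}
    (hq : q ∈ relationDegrees g v)
    (hmin : Minimal (· ∈ powExponents g (v + single y a) (t + c.degree))
      (prodExponent g (v + single y a) t c)) :
    t < q := by
  obtain ⟨hq₀, b, hb⟩ := hq
  by_contra! hle
  obtain ⟨t, rfl⟩ := exists_add_of_le hle
  have hdeg : t + (b + c).degree = q + t + c.degree := by
    rw [map_add, h.degree_eq_of_linearCombination_eq hb]
    omega
  have hle' : prodExponent g (v + single y a) t (b + c) ≤
      prodExponent g (v + single y a) (q + t) c :=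
    (h.prodExponent_le_iff ha hdeg).2 ⟨q, add_comm q t, by rw [map_add, hb]⟩
  obtain ⟨_, ht, -⟩ := (h.prodExponent_le_iff ha hdeg.symm).1
    (hmin.le_of_le ⟨t, b + c, hdeg, rfl⟩ hle')
  omega

theorem minimal_prodExponent_single {a : ℕ} (ha : 0 < a) {i₀ : ι} (hi₀ : IsUnavoidable g v i₀)
    {t : ℕ} (ht : ∀ q ∈ relationDegrees g v, t < q) (n : ℕ) :
    Minimal (· ∈ powExponents g (v + single y a) (t + n))
      (prodExponent g (v + single y a) t (single i₀ n)) := by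
  refine ⟨⟨t, _, by rw [Finsupp.degree_single], rfl⟩, ?_⟩
  rintro _ ⟨t', c, hdeg, rfl⟩ hle
  replace hdeg : t' + c.degree = t + (single i₀ n).degree := by rwa [Finsupp.degree_single]
  obtain ⟨q, rfl, hc⟩ := (h.prodExponent_le_iff ha hdeg).1 hle
  have hn : n ≤ c i₀ := hi₀ n q c (by rw [hc, Finsupp.linearCombination_single])
  obtain ⟨b, rfl⟩ := exists_add_of_le (Finsupp.single_le_iff.2 hn)
  rw [map_add, add_comm, add_left_inj] at hc
  obtain rfl : q = 0 := by
    by_contra hq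
    have := ht q ⟨Nat.pos_of_ne_zero hq, b, hc⟩
    omega
  exact (h.prodExponent_le_iff ha hdeg.symm).2 ⟨0, rfl, by rw [map_add, hc]; simp⟩

theorem monomial_pow_mul_pow_notMem (R : Type*) [CommSemiring R] [Nontrivial R] {a : ℕ}
    (ha : 0 < a) {i₀ : ι} (hi₀ : IsUnavoidable g v i₀) {t : ℕ}
    (ht : ∀ q ∈ relationDegrees g v, t < q) (n : ℕ) :
    monomial (v + single y a) (1 : R) ^ t * monomial (g i₀) 1 ^ n ∉
      idealOfVars σ R * monomialIdeal R (insert (v + single y a) (Set.range g)) ^ (t + n) := by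
  have hprod : monomial (v + single y a) (1 : R) ^ t * monomial (g i₀) 1 ^ n =
      monomial (prodExponent g (v + single y a) t (single i₀ n)) 1 := by
    simp [monomial_pow, monomial_mul, prodExponent, Finsupp.linearCombination_single]
  rw [hprod, monomialIdeal_insert_range_pow, monomial_mem_idealOfVars_mul_monomialIdeal_iff]
  rintro ⟨f, hf, hlt⟩
  exact (h.minimal_prodExponent_single ha hi₀ ht n).not_lt hf hlt

theorem maxGenDeg_pow (K : Type*) [Field K] {a r : ℕ} (ha : 0 < a)
    (hr : IsLeast (relationDegrees g v) (r + 1)) {i₀ : ι} (hi₀ : IsUnavoidable g v i₀) (n : ℕ) :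
    maxGenDeg (monomialIdeal K (insert (v + single y a) (Set.range g)) ^ n) =
      δ * n + a * min n r := by
  rw [monomialIdeal_insert_range_pow]
  apply maxGenDeg_monomialIdeal
  constructor
  · obtain ⟨k, hk⟩ := exists_add_of_le (min_le_left n r)
    have hlt : ∀ q ∈ relationDegrees g v, min n r < q := fun q hq ↦
      (min_le_right n r).trans_lt (hr.2 hq)
    have hmin := h.minimal_prodExponent_single ha hi₀ hlt k
    rw [← hk] at hmin
    refine ⟨_, hmin, ?_⟩
    rw [h.degree_prodExponent, Finsupp.degree_single, ← hk]
  · rintro _ ⟨_, hmin, rfl⟩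
    obtain ⟨t, c, rfl, rfl⟩ := hmin.prop
    have ht : t < r + 1 := h.lt_of_minimal_prodExponent ha hr.1 hmin
    rw [h.degree_prodExponent]
    gcongr
    omega

end IsEquigenerated

end ReductionNumber

section StabilityIndex

/-- The stability index of the excess `d n - δ * n` of a sequence `d`, with the subtractions
moved to the other side. -/
noncomputable def stabilityIndex (d : ℕ → ℕ) (δ : ℕ) : ℕ :=
  sInf {n₀ | ∀ n ≥ n₀, d n + δ * n₀ = d n₀ + δ * n}

theorem stabilityIndex_eq {d : ℕ → ℕ} {δ a r : ℕ} (ha : 0 < a)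
    (hd : ∀ n, d n = δ * n + a * min n r) : stabilityIndex d δ = r := by
  have hset : {n₀ | ∀ n ≥ n₀, d n + δ * n₀ = d n₀ + δ * n} = Set.Ici r := by
    ext n₀
    simp only [Set.mem_ofPred_eq, Set.mem_Ici, hd]
    constructor
    · intro h
      have hmin : a * min (max n₀ r) r = a * min n₀ r := by
        linarith [h (max n₀ r) (le_max_left n₀ r)]
      have := Nat.eq_of_mul_eq_mul_left ha hmin
      omega
    · intro h n hn
      rw [min_eq_right h, min_eq_right (h.trans hn)]
      ring
  rw [stabilityIndex, hset, csInf_Ici]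

end StabilityIndex

section CyclicSystem

/-- The linear system expressing that `q` times the vector `(w, 1, ..., 1)` is the combination with
coefficients `c` of the cyclically permuted vectors `(d, 1, 0, ..., 0)`. -/
structure IsCyclicSolution {m : ℕ} (d w q : ℕ) (c : Fin (m + 2) → ℕ) : Prop where
  eq_zero : d * c 0 + c (Fin.last (m + 1)) = q * w
  eq_succ : ∀ j : Fin (m + 1), d * c j.succ + c j.castSucc = q

namespace IsCyclicSolution

variable {m d w q : ℕ} {c : Fin (m + 2) → ℕ} (hc : IsCyclicSolution d w q c)
include hc

-- The defect `(d + 1) * c j - q` from the constant solution is multiplied by `-d` when passing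
-- from `j + 1` to `j`.
theorem defect_eq (j : Fin (m + 2)) :
    ((d + 1) * c j - q : ℤ) =
      (-d) ^ (m + 1 - j.val) * ((d + 1) * c (Fin.last (m + 1)) - q) := by
  induction j using Fin.reverseInduction with
  | last => simp
  | cast j ih =>
    have hexp : m + 1 - j.castSucc.val = m + 1 - j.succ.val + 1 := by
      simp only [Fin.val_castSucc, Fin.val_succ]
      omega
    have hrow : (d * c j.succ + c j.castSucc : ℤ) = q := by exact_mod_cast hc.eq_succ j
    rw [hexp, pow_succ, mul_right_comm, ← ih]
    linear_combination (d + 1 : ℤ) * hrow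

theorem defect_last_ne_zero (hq : 0 < q) (hw : 1 < w) :
    ((d + 1) * c (Fin.last (m + 1)) - q : ℤ) ≠ 0 := by
  intro hlast
  have hzero : ((d + 1) * c 0 - q : ℤ) = 0 := by rw [hc.defect_eq, hlast, mul_zero]
  have hrow : (d * c 0 + c (Fin.last (m + 1)) : ℤ) = q * w := by exact_mod_cast hc.eq_zero
  have hprod : (q * (d + 1) * (w - 1) : ℤ) = 0 := by
    linear_combination (-d - 1 : ℤ) * hrow + (d : ℤ) * hzero + hlast
  have : (0 : ℤ) < q * (d + 1) * (w - 1) := by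
    have : (1 : ℤ) < w := by exact_mod_cast hw
    have : (0 : ℤ) < w - 1 := by linarith
    positivity
  exact this.ne' hprod

theorem pow_le_abs_sub (hq : 0 < q) (hw : 1 < w) : (d ^ m : ℤ) ≤ |(c 1 - c 0 : ℤ)| := by
  have hrow : (d * c 1 + c 0 : ℤ) = q := by exact_mod_cast hc.eq_succ 0
  have hsub : (c 1 - c 0 : ℤ) = (-d) ^ m * ((d + 1) * c (Fin.last (m + 1)) - q) := by
    have := hc.defect_eq 1
    simp only [Fin.val_one, Nat.add_sub_cancel] at this
    linear_combination this - hrow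
  rw [hsub, abs_mul, abs_pow, abs_neg, Nat.abs_cast]
  exact le_mul_of_one_le_right (by positivity) (Int.one_le_abs (hc.defect_last_ne_zero hq hw))

theorem apply_one_ne_zero (hq : 0 < q) (hwd : w < d) : c 1 ≠ 0 := by
  intro h₁
  have hrow := hc.eq_succ 0
  simp only [Fin.succ_zero_eq_one, h₁, mul_zero, zero_add, Fin.castSucc_zero] at hrow
  have := hc.eq_zero
  rw [hrow, mul_comm d] at this
  have : q * w < q * d := by gcongr
  omega

theorem pow_add_two_le (hq : 0 < q) (hw : 1 < w) (hwd : w < d) : d ^ m + 2 ≤ q := by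
  have hrow : (d * c 1 + c 0 : ℤ) = q := by exact_mod_cast hc.eq_succ 0
  have hc₁ : (1 : ℤ) ≤ c 1 := by
    exact_mod_cast Nat.one_le_iff_ne_zero.2 (hc.apply_one_ne_zero hq hwd)
  have hd : (3 : ℤ) ≤ d := by omega
  have three_mul_le : (3 * c 1 + c 0 : ℤ) ≤ q := by
    rw [← hrow]
    gcongr
  zify
  rcases le_abs.1 (hc.pow_le_abs_sub hq hw) with h | h
  · have : (1 : ℤ) ≤ d ^ m := one_le_pow₀ (by linarith)
    linarith [Int.natCast_nonneg (c 0)]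
  · linarith

end IsCyclicSolution

theorem mul_pow_le_abs_one_sub_neg_pow (m : ℕ) {d w : ℕ} (hwd : w < d) :
    ((d + 1) * (w - 1) * d ^ m : ℤ) ≤ |1 - (-d : ℤ) ^ (m + 2)| := by
  have hsq : ((d + 1) * (w - 1) : ℤ) ≤ d ^ 2 - 1 := by
    have : (w : ℤ) < d := by exact_mod_cast hwd
    nlinarith
  have hpow : (1 : ℤ) ≤ d ^ m := one_le_pow₀ (by omega)
  calc ((d + 1) * (w - 1) * d ^ m : ℤ)
      ≤ (d ^ 2 - 1) * d ^ m := by gcongr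
    _ ≤ d ^ (m + 2) - 1 := by rw [pow_add]; linarith
    _ = |(-d : ℤ) ^ (m + 2)| - |1| := by rw [abs_pow, abs_neg, Nat.abs_cast, abs_one]
    _ ≤ |1 - (-d : ℤ) ^ (m + 2)| := by
      rw [abs_sub_comm]
      exact abs_sub_abs_le_abs_sub _ _

-- The recursion for the defects and the rows `j + 1` leave one condition, the row `0`.
theorem exists_isCyclicSolution_of_mul_eq {m d w : ℕ} (hw : 1 ≤ w) (hd : 1 ≤ d) {Q E : ℤ}
    (hQ : 0 < Q) (hE : E * (1 - (-d) ^ (m + 2)) = (d + 1) * Q * (w - 1))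
    (hle : d ^ m * |E| ≤ Q) :
    ∃ q > 0, ∃ c : Fin (m + 2) → ℕ, IsCyclicSolution d w q c := by
  obtain ⟨C, hC⟩ : ∃ C : Fin (m + 2) → ℤ, ∀ j, C j = Q + (-d) ^ (m + 1 - j.val) * E :=
    ⟨_, fun _ ↦ rfl⟩
  have row_zero : d * C 0 + C (Fin.last (m + 1)) = (d + 1) * Q * w := by
    simp only [hC, Fin.val_zero, Fin.val_last, Nat.sub_zero, Nat.sub_self]
    linear_combination hE
  have row_succ (j : Fin (m + 1)) : d * C j.succ + C j.castSucc = (d + 1) * Q := by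
    have hexp : m + 1 - j.castSucc.val = m + 1 - j.succ.val + 1 := by
      simp only [Fin.val_castSucc, Fin.val_succ]
      omega
    rw [hC, hC, hexp]
    ring
  have abs_le (k : ℕ) (hk : k ≤ m) : |(-d : ℤ) ^ k * E| ≤ Q := by
    rw [abs_mul, abs_pow, abs_neg, Nat.abs_cast]
    refine le_trans ?_ hle
    gcongr
    exact_mod_cast hd
  have nonneg : ∀ j, 0 ≤ C j := by
    have hd' : (1 : ℤ) ≤ d := by exact_mod_cast hd
    have hw' : (1 : ℤ) ≤ w := by exact_mod_cast hw
    refine Fin.cases ?_ fun j ↦ ?_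
    · have last_le : C (Fin.last (m + 1)) ≤ 2 * Q := by
        rw [hC, Fin.val_last, Nat.sub_self]
        linarith [le_of_abs_le (abs_le 0 m.zero_le)]
      have le_row : 2 * Q ≤ (d + 1) * Q * w :=
        calc 2 * Q = (1 + 1) * Q * 1 := by ring
          _ ≤ (d + 1) * Q * w := by gcongr
      exact nonneg_of_mul_nonneg_right (by linarith) (by linarith : (0 : ℤ) < d)
    · rw [hC, Fin.val_succ]
      linarith [neg_le_of_abs_le (abs_le (m + 1 - (j + 1)) (by omega))]
  lift Q to ℕ using hQ.le
  choose c hc using fun j ↦ Int.eq_ofNat_of_zero_le (nonneg j)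
  simp only [hc] at row_zero row_succ
  exact ⟨(d + 1) * Q, mul_pos d.succ_pos (by exact_mod_cast hQ), c, by exact_mod_cast row_zero,
    fun j ↦ by exact_mod_cast row_succ j⟩

-- With `N = 1 - (-d) ^ (m + 2)`, scaling by `Q = N ^ 2` clears both the denominator and the sign
-- of `E = (d + 1) * Q * (w - 1) / N`.
theorem exists_isCyclicSolution (m : ℕ) {d w : ℕ} (hw : 1 ≤ w) (hwd : w < d) :
    ∃ q > 0, ∃ c : Fin (m + 2) → ℕ, IsCyclicSolution d w q c := by
  obtain ⟨N, hN⟩ : ∃ N : ℤ, N = 1 - (-d) ^ (m + 2) := ⟨_, rfl⟩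
  have N_ne_zero : N ≠ 0 := by
    intro h₀
    have hpow : |(-d : ℤ) ^ (m + 2)| = 1 := by rw [← sub_eq_zero.1 (hN.symm.trans h₀), abs_one]
    rw [abs_pow, abs_neg, Nat.abs_cast] at hpow
    have : (1 : ℤ) < d ^ (m + 2) := one_lt_pow₀ (by omega) (by omega)
    omega
  have hw' : (0 : ℤ) ≤ w - 1 := by omega
  refine exists_isCyclicSolution_of_mul_eq (Q := N ^ 2) (E := (d + 1) * (w - 1) * N) hw (by omega)
    (by positivity) (by rw [← hN]; ring) ?_
  calc d ^ m * |(d + 1) * (w - 1) * N|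
      = (d + 1) * (w - 1) * d ^ m * |N| := by
        rw [abs_mul, abs_of_nonneg (by positivity : (0 : ℤ) ≤ (d + 1) * (w - 1))]
        ring
    _ ≤ |N| * |N| := by
        gcongr
        exact hN ▸ mul_pow_le_abs_one_sub_neg_pow m hwd
    _ = N ^ 2 := by rw [abs_mul_abs_self, sq]

end CyclicSystem

section CyclicExponent

variable {s : ℕ} [NeZero s] {d b : ℕ}

/-- The exponent `(δ - 1) e_i + e_{i+1}` of the monomial `M_i`, where `d = δ - 1`, in the variables
`X_1, ..., X_s, Y`; the last variable is `Y`. -/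
noncomputable def cyclicExponent (s d : ℕ) [NeZero s] (i : Fin s) : Fin (s + 1) →₀ ℕ :=
  single i.castSucc d + single (i + 1).castSucc 1

/-- The exponent of the monomial `X_1 ^ (b + 1) * X_2 * ⋯ * X_s`, which is `M` without its power
of `Y` for `b = δ - s`. -/
noncomputable def baseExponent (s b : ℕ) [NeZero s] : Fin (s + 1) →₀ ℕ :=
  single (Fin.castSucc 0) b + ∑ i : Fin s, single i.castSucc 1

theorem isEquigenerated_cyclicExponent (h : d + 1 = b + s) :
    IsEquigenerated (cyclicExponent s d) (baseExponent s b) (Fin.last s) (d + 1) where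
  degree_pos := d.succ_pos
  degree_gen i := by simp [cyclicExponent]
  degree_base := by simp [baseExponent, h]
  gen_apply i := by simp [cyclicExponent, (Fin.castSucc_lt_last _).ne]
  base_apply := by
    simp [baseExponent, -Fin.castSucc_zero, -Fin.castSucc_zero', (Fin.castSucc_lt_last _).ne]

theorem baseExponent_castSucc (i : Fin s) :
    baseExponent s b i.castSucc = (if 0 = i then b else 0) + 1 := by
  simp [baseExponent, Finsupp.single_apply, -Fin.castSucc_zero, -Fin.castSucc_zero']

theorem linearCombination_cyclicExponent_castSucc (c : Fin s →₀ ℕ) (i : Fin s) :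
    linearCombination ℕ (cyclicExponent s d) c i.castSucc = d * c i + c (i - 1) := by
  have hiff (j : Fin s) : j + 1 = i ↔ j = i - 1 := eq_sub_iff_add_eq.symm
  rw [Finsupp.linearCombination_apply, Finsupp.sum_fintype _ _ (by simp), Finsupp.finsetSum_apply]
  simp [cyclicExponent, Finsupp.single_apply, hiff, Finset.sum_add_distrib, mul_comm]

theorem linearCombination_cyclicExponent_eq_smul_iff {m q : ℕ} (c : Fin (m + 2) →₀ ℕ) :
    linearCombination ℕ (cyclicExponent (m + 2) d) c = q • baseExponent (m + 2) b ↔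
      IsCyclicSolution d (b + 1) q c := by
  have last_coord : linearCombination ℕ (cyclicExponent (m + 2) d) c (Fin.last (m + 2)) =
      (q • baseExponent (m + 2) b) (Fin.last (m + 2)) := by
    simp [Finsupp.linearCombination_apply, Finsupp.sum, cyclicExponent, baseExponent,
      (Fin.castSucc_lt_last _).ne]
  have zero_sub_one : (0 - 1 : Fin (m + 2)) = Fin.last (m + 1) := by
    rw [sub_eq_iff_eq_add, Fin.last_add_one]
  have succ_sub_one (j : Fin (m + 1)) : j.succ - 1 = j.castSucc := by
    rw [sub_eq_iff_eq_add, Fin.coeSucc_eq_succ]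
  rw [DFunLike.ext_iff, Fin.forall_fin_succ', and_iff_left last_coord]
  simp only [linearCombination_cyclicExponent_castSucc, Finsupp.smul_apply, smul_eq_mul,
    baseExponent_castSucc, Fin.forall_fin_succ (n := m + 1), zero_sub_one, succ_sub_one, if_true,
    (Fin.succ_ne_zero _).symm, if_false, zero_add, mul_one]
  exact ⟨fun ⟨h₀, hs⟩ ↦ ⟨h₀, hs⟩, fun ⟨h₀, hs⟩ ↦ ⟨h₀, hs⟩⟩

theorem relationDegrees_cyclicExponent_nonempty (hs : 2 ≤ s) (hbd : b + 1 < d) :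
    (relationDegrees (cyclicExponent s d) (baseExponent s b)).Nonempty := by
  obtain ⟨m, rfl⟩ := Nat.exists_eq_add_of_le' hs
  obtain ⟨q, hq, c, hc⟩ := exists_isCyclicSolution m b.succ_pos hbd
  exact ⟨q, hq, Finsupp.equivFunOnFinite.symm c,
    (linearCombination_cyclicExponent_eq_smul_iff _).2 hc⟩

theorem pow_add_two_le_of_mem_relationDegrees (hs : 2 ≤ s) (hb : 0 < b) (hbd : b + 1 < d) {q : ℕ}
    (hq : q ∈ relationDegrees (cyclicExponent s d) (baseExponent s b)) :
    d ^ (s - 2) + 2 ≤ q := by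
  obtain ⟨m, rfl⟩ := Nat.exists_eq_add_of_le' hs
  obtain ⟨hq₀, c, hc⟩ := hq
  exact ((linearCombination_cyclicExponent_eq_smul_iff c).1 hc).pow_add_two_le hq₀
    (Nat.succ_lt_succ hb) hbd

-- If `c 0 < n`, coordinate `0` forces `c (-1)` to exceed `q`, contradicting coordinate `-1`.
theorem isUnavoidable_cyclicExponent (hs : 3 ≤ s) (hd : 0 < d) :
    IsUnavoidable (cyclicExponent s d) (baseExponent s b) 0 := by
  intro n q c hc
  have coord (i : Fin s) : d * c i + c (i - 1) =
      q * ((if 0 = i then b else 0) + 1) + (d * single 0 n i + single 0 n (i - 1)) := by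
    rw [← linearCombination_cyclicExponent_castSucc, ← linearCombination_cyclicExponent_castSucc,
      hc, Finsupp.linearCombination_single, ← baseExponent_castSucc]
    rfl
  obtain ⟨m, rfl⟩ := Nat.exists_eq_add_of_le' hs
  have zero_ne_neg_one : (0 : Fin (m + 3)) ≠ -1 := by simp
  have zero_ne_neg_two : (0 : Fin (m + 3)) ≠ -1 - 1 := by
    rw [ne_comm, sub_ne_zero]
    simp [Fin.ext_iff]
  have coord_zero : d * c 0 + c (-1) = q * (b + 1) + d * n := by
    simpa [zero_ne_neg_one] using coord 0
  have coord_neg_one : d * c (-1) + c (-1 - 1) = q := by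
    simpa [zero_ne_neg_one, zero_ne_neg_two] using coord (-1)
  by_contra! hlt
  have lt_coeff : q < c (-1) := by
    have : d * c 0 < d * n := by gcongr
    have : q * 1 ≤ q * (b + 1) := by gcongr; omega
    omega
  have coeff_le : 1 * c (-1) ≤ d * c (-1) := by gcongr; exact hd
  omega

theorem monomial_cyclicExponent (R : Type*) [CommSemiring R] (i : Fin s) :
    monomial (cyclicExponent s d i) (1 : R) = X i.castSucc ^ d * X (i + 1).castSucc := by
  rw [X_pow_eq_monomial, X, monomial_mul, one_mul, cyclicExponent]

theorem monomial_baseExponent_add_single (R : Type*) [CommSemiring R] (a : ℕ) :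
    monomial (baseExponent s b + single (Fin.last s) a) (1 : R) =
      X 0 ^ b * (∏ i : Fin s, X i.castSucc) * X (Fin.last s) ^ a := by
  have hprod : ∏ i : Fin s, X (R := R) i.castSucc =
      monomial (∑ i : Fin s, single i.castSucc 1) 1 := (monomial_sum_one _ _).symm
  rw [hprod, X_pow_eq_monomial, X_pow_eq_monomial, monomial_mul, monomial_mul, one_mul, one_mul,
    baseExponent, Fin.castSucc_zero']

end CyclicExponent

/-- for `s ≥ 3`, `δ ≥ s+1`, `a ≥ 1` and `I = (M_1,...,M_s, M)` with
`M_i = X_i^{δ−1}X_{i+1}` (cyclically) and `M = X_1^{δ−s+1}X_2⋯X_s·Y^a`: for all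
`1 ≤ t ≤ r(I)` and `n ≥ 0` the monomial `M^t M_1^n` is a minimal generator of `I^{t+n}`;
consequently `ε(I;n) = an` for `n ≤ r(I)−1`, `ε(I;n) = r(I)·a` for `n ≥ r(I)`, and
`gstab(I) = r(I) > (δ−1)^{s−2}`. -/
theorem degree_excess_and_gstab_of_example
    {K : Type*} [Field K] (s : ℕ) [NeZero s] (hs : 3 ≤ s) (δ : ℕ) (hδ : s + 1 ≤ δ)
    (a : ℕ) (ha : 1 ≤ a)
    (Mgen : Fin s → MvPolynomial (Fin (s + 1)) K)
    (hMgen : Mgen = fun i =>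
      X (Fin.castSucc i) ^ (δ - 1) * X (Fin.castSucc (i + 1)))
    (M : MvPolynomial (Fin (s + 1)) K)
    (hM : M = X (0 : Fin (s + 1)) ^ (δ - s) * (∏ i : Fin s, X (Fin.castSucc i)) *
      X (Fin.last s) ^ a)
    (J I : Ideal (MvPolynomial (Fin (s + 1)) K))
    (hJ : J = Ideal.span (Set.range Mgen))
    (hI : I = J ⊔ Ideal.span {M})
    (mI : Ideal (MvPolynomial (Fin (s + 1)) K)) (hmI : mI = Ideal.span (Set.range X))
    (r : ℕ) (hr : r = sInf {n | I ^ (n + 1) = J * I ^ n})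
    (gstab : ℕ)
    (hgstab : gstab = sInf {n₀ | ∀ n ≥ n₀,
      maxGenDeg (I ^ n) + δ * n₀ = maxGenDeg (I ^ n₀) + δ * n}) :
    (∀ t n : ℕ, 1 ≤ t → t ≤ r → M ^ t * Mgen 0 ^ n ∉ mI * I ^ (t + n)) ∧
    (∀ n : ℕ, 1 ≤ n → n ≤ r - 1 → maxGenDeg (I ^ n) = δ * n + a * n) ∧
    (∀ n : ℕ, r ≤ n → maxGenDeg (I ^ n) = δ * n + r * a) ∧
    gstab = r ∧ (δ - 1) ^ (s - 2) < r := by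
  obtain ⟨b, rfl⟩ := Nat.exists_eq_add_of_le' (Nat.le_of_succ_le hδ)
  obtain ⟨d, hd⟩ : ∃ d, b + s = d + 1 := ⟨b + s - 1, by omega⟩
  simp only [hd, Nat.add_sub_cancel, ← monomial_cyclicExponent] at hMgen
  rw [Nat.add_sub_cancel, ← monomial_baseExponent_add_single] at hM
  rw [hMgen, span_range_monomial] at hJ
  rw [hJ, hM, ← monomialIdeal_insert] at hI
  have gens := isEquigenerated_cyclicExponent hd.symm
  have unavoidable := isUnavoidable_cyclicExponent (b := b) hs (by omega : 0 < d)
  have isLeast_r : IsLeast (relationDegrees (cyclicExponent s d) (baseExponent s b)) (r + 1) := by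
    rw [hr, hI, hJ]
    exact gens.isLeast_relationDegrees K ha
      (relationDegrees_cyclicExponent_nonempty (by omega) (by omega))
  have maxGenDeg_eq (n : ℕ) : maxGenDeg (I ^ n) = (b + s) * n + a * min n r := by
    rw [hI, hd, gens.maxGenDeg_pow K ha isLeast_r unavoidable]
  refine ⟨fun t n _ ht ↦ ?_, fun n _ hn ↦ ?_, fun n hn ↦ ?_, ?_, ?_⟩
  · rw [hM, hMgen, hmI, hI]
    exact gens.monomial_pow_mul_pow_notMem K ha unavoidable
      (fun q hq ↦ (Nat.lt_succ_of_le ht).trans_le (isLeast_r.2 hq)) n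
  · rw [maxGenDeg_eq, min_eq_left (by omega)]
  · rw [maxGenDeg_eq, min_eq_right hn, mul_comm a]
  · exact hgstab.trans (stabilityIndex_eq ha maxGenDeg_eq)
  · have := pow_add_two_le_of_mem_relationDegrees (by omega) (by omega) (by omega) isLeast_r.1
    rw [hd, Nat.add_sub_cancel]
    omega
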